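/- In the tied braid monoid TB_n^B of type B, the following commutation relations between generalized ties and braid generators hold: σ_i η_{i,j} = η_{i+1,j} σ_i whenever 1 ≤ i and i+1 < j ≤ n; σ_j η_{i,j} = η_{i,j+1} σ_j whenever 1 ≤ i < j ≤ n−1; σ_{i−1} η_{i,j} = η_{i−1,j} σ_{i−1} whenever 2 ≤ i < j ≤ n; and σ_{j−1} η_{i,j} = η_{i,j−1} σ_{j−1} whenever 1 ≤ i < j−1 and j ≤ n. -/

import Mathlib

/-! The tied braid monoid of type B, `TBₙᴮ`, presented by generators and relations. -/

/-- Generators of the tied braid monoid of type B on `n` (moving) strands: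
`sig i` is `σ_{i+1}`, `sigInv i` is `σ_{i+1}⁻¹`, `rho` is `ρ₁`, `rhoInv` is `ρ₁⁻¹`,
`phi` is `φ₁` and `eta i` is `η_{i+1}` (for `i : Fin (n-1)`). -/
inductive TBGen (n : ℕ) : Type
  | sig : Fin (n - 1) → TBGen n
  | sigInv : Fin (n - 1) → TBGen n
  | rho : TBGen n
  | rhoInv : TBGen n
  | phi : TBGen n
  | eta : Fin (n - 1) → TBGen n

namespace TiedBraidB

variable (n : ℕ)

/-- The word `σᵢ` (for `1 ≤ i ≤ n-1`; junk value `1` otherwise). -/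
def wσ (i : ℕ) : FreeMonoid (TBGen n) :=
  if h : 1 ≤ i ∧ i ≤ n - 1 then FreeMonoid.of (TBGen.sig ⟨i - 1, by omega⟩) else 1

/-- The word `σᵢ⁻¹`. -/
def wσi (i : ℕ) : FreeMonoid (TBGen n) :=
  if h : 1 ≤ i ∧ i ≤ n - 1 then FreeMonoid.of (TBGen.sigInv ⟨i - 1, by omega⟩) else 1

/-- The word `ηᵢ`. -/
def wη (i : ℕ) : FreeMonoid (TBGen n) :=
  if h : 1 ≤ i ∧ i ≤ n - 1 then FreeMonoid.of (TBGen.eta ⟨i - 1, by omega⟩) else 1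

/-- The word `ρ₁`. -/
def wρ : FreeMonoid (TBGen n) := FreeMonoid.of TBGen.rho

/-- The word `ρ₁⁻¹`. -/
def wρi : FreeMonoid (TBGen n) := FreeMonoid.of TBGen.rhoInv

/-- The word `φ₁`. -/
def wφ : FreeMonoid (TBGen n) := FreeMonoid.of TBGen.phi

/-- The descending word `σₖ σₖ₋₁ ⋯ σ₁`. -/
def wσDesc : ℕ → FreeMonoid (TBGen n)
  | 0 => 1
  | k + 1 => wσ n (k + 1) * wσDesc k

/-- The ascending word `σ₁ σ₂ ⋯ σₖ`. -/
def wσAsc : ℕ → FreeMonoid (TBGen n)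
  | 0 => 1
  | k + 1 => wσAsc k * wσ n (k + 1)

/-- The descending word `σₖ⁻¹ σₖ₋₁⁻¹ ⋯ σ₁⁻¹`. -/
def wσiDesc : ℕ → FreeMonoid (TBGen n)
  | 0 => 1
  | k + 1 => wσi n (k + 1) * wσiDesc k

/-- The ascending word `σ₁⁻¹ σ₂⁻¹ ⋯ σₖ⁻¹`. -/
def wσiAsc : ℕ → FreeMonoid (TBGen n)
  | 0 => 1
  | k + 1 => wσiAsc k * wσi n (k + 1)

/-- The defining relations of the tied braid monoid `TBₙᴮ` of type B. -/
inductive tbRel : FreeMonoid (TBGen n) → FreeMonoid (TBGen n) → Prop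
  | sig_inv (i : ℕ) (h1 : 1 ≤ i) (h2 : i ≤ n - 1) :
      tbRel (wσ n i * wσi n i) 1
  | inv_sig (i : ℕ) (h1 : 1 ≤ i) (h2 : i ≤ n - 1) :
      tbRel (wσi n i * wσ n i) 1
  | rho_inv : tbRel (wρ n * wρi n) 1
  | inv_rho : tbRel (wρi n * wρ n) 1
  | sig_comm (i j : ℕ) (h1 : 1 ≤ i) (h2 : i + 1 < j) (h3 : j ≤ n - 1) :
      tbRel (wσ n i * wσ n j) (wσ n j * wσ n i)
  | sig_braid (i : ℕ) (h1 : 1 ≤ i) (h2 : i + 1 ≤ n - 1) :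
      tbRel (wσ n i * wσ n (i + 1) * wσ n i) (wσ n (i + 1) * wσ n i * wσ n (i + 1))
  | rho_sig (i : ℕ) (h1 : 2 ≤ i) (h2 : i ≤ n - 1) :
      tbRel (wρ n * wσ n i) (wσ n i * wρ n)
  | rho_sig_rho_sig (h : 2 ≤ n) :
      tbRel (wρ n * wσ n 1 * wρ n * wσ n 1) (wσ n 1 * wρ n * wσ n 1 * wρ n)
  | eta_comm (i j : ℕ) (h1 : 1 ≤ i) (h2 : i ≤ n - 1) (h3 : 1 ≤ j) (h4 : j ≤ n - 1) :
      tbRel (wη n i * wη n j) (wη n j * wη n i)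
  | eta_sig (i : ℕ) (h1 : 1 ≤ i) (h2 : i ≤ n - 1) :
      tbRel (wη n i * wσ n i) (wσ n i * wη n i)
  | eta_sig_far (i j : ℕ) (h1 : 1 ≤ i) (h2 : i ≤ n - 1) (h3 : 1 ≤ j) (h4 : j ≤ n - 1)
      (h5 : i + 1 < j ∨ j + 1 < i) :
      tbRel (wη n i * wσ n j) (wσ n j * wη n i)
  | eta_sig_sig (i j : ℕ) (h1 : 1 ≤ i) (h2 : i ≤ n - 1) (h3 : 1 ≤ j) (h4 : j ≤ n - 1)
      (h5 : j = i + 1 ∨ i = j + 1) :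
      tbRel (wη n i * wσ n j * wσ n i) (wσ n j * wσ n i * wη n j)
  | eta_sig_sigInv (i j : ℕ) (h1 : 1 ≤ i) (h2 : i ≤ n - 1) (h3 : 1 ≤ j) (h4 : j ≤ n - 1)
      (h5 : j = i + 1 ∨ i = j + 1) :
      tbRel (wη n i * wσ n j * wσi n i) (wσ n j * wσi n i * wη n j)
  | eta_eta_sig (i j : ℕ) (h1 : 1 ≤ i) (h2 : i ≤ n - 1) (h3 : 1 ≤ j) (h4 : j ≤ n - 1)
      (h5 : j = i + 1 ∨ i = j + 1) :
      tbRel (wη n i * wη n j * wσ n i) (wσ n i * wη n i * wη n j)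
  | eta_eta_sig' (i j : ℕ) (h1 : 1 ≤ i) (h2 : i ≤ n - 1) (h3 : 1 ≤ j) (h4 : j ≤ n - 1)
      (h5 : j = i + 1 ∨ i = j + 1) :
      tbRel (wη n i * wη n j * wσ n i) (wη n j * wσ n i * wη n j)
  | eta_idem (i : ℕ) (h1 : 1 ≤ i) (h2 : i ≤ n - 1) :
      tbRel (wη n i * wη n i) (wη n i)
  | phi_idem : tbRel (wφ n * wφ n) (wφ n)
  | rho_eta (i : ℕ) (h1 : 1 ≤ i) (h2 : i ≤ n - 1) :
      tbRel (wρ n * wη n i) (wη n i * wρ n)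
  | rho_phi : tbRel (wρ n * wφ n) (wφ n * wρ n)
  | phi_eta (i : ℕ) (h1 : 1 ≤ i) (h2 : i ≤ n - 1) :
      tbRel (wφ n * wη n i) (wη n i * wφ n)
  | phi_sig (i : ℕ) (h1 : 2 ≤ i) (h2 : i ≤ n - 1) :
      tbRel (wφ n * wσ n i) (wσ n i * wφ n)
  | phi_move (i : ℕ) (h1 : 2 ≤ i) (h2 : i ≤ n) :
      tbRel (wσDesc n (i - 1) * wφ n * wσiAsc n (i - 1))
        (wσiDesc n (i - 1) * wφ n * wσAsc n (i - 1))
  | phi_eta_one (h : 2 ≤ n) :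
      tbRel (wφ n * wη n 1) (wφ n * wσ n 1 * wφ n * wσi n 1)
  | phi_eta_one' (h : 2 ≤ n) :
      tbRel (wφ n * wσ n 1 * wφ n * wσi n 1) (wσ n 1 * wφ n * wσi n 1 * wη n 1)

/-- The tied braid monoid of type B on `n` strands. -/
def TB : Type := (conGen (tbRel n)).Quotient

instance : Monoid (TB n) := inferInstanceAs (Monoid (conGen (tbRel n)).Quotient)

/-- The canonical projection from the free monoid on the generators onto `TBₙᴮ`. -/
def mk : FreeMonoid (TBGen n) →* TB n := Con.mk' _

/-- The generator `σᵢ` of `TBₙᴮ`. -/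
def σB (i : ℕ) : TB n := mk n (wσ n i)

/-- The generator `σᵢ⁻¹` of `TBₙᴮ`. -/
def σiB (i : ℕ) : TB n := mk n (wσi n i)

/-- The generator `ρ₁` of `TBₙᴮ`. -/
def ρB : TB n := mk n (wρ n)

/-- The generator `ρ₁⁻¹` of `TBₙᴮ`. -/
def ρiB : TB n := mk n (wρi n)

/-- The generator `φ₁` of `TBₙᴮ`. -/
def φB : TB n := mk n (wφ n)

/-- The generator `ηᵢ` of `TBₙᴮ`. -/
def ηB (i : ℕ) : TB n := mk n (wη n i)

/-- The word `σᵢ σᵢ₊₁ ⋯ σₖ` (empty if `k < i`). -/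
def wσRange (i k : ℕ) : FreeMonoid (TBGen n) :=
  ((List.range' i (k + 1 - i)).map (wσ n)).prod

/-- The word `σₖ⁻¹ σₖ₋₁⁻¹ ⋯ σᵢ⁻¹` (empty if `k < i`). -/
def wσiRangeRev (i k : ℕ) : FreeMonoid (TBGen n) :=
  ((List.range' i (k + 1 - i)).reverse.map (wσi n)).prod

/-- The word representing the generalized tie `η_{i,j}`:
`σᵢ ⋯ σ_{j-2} η_{j-1} σ_{j-2}⁻¹ ⋯ σᵢ⁻¹` for `i < j`, with the conventions
`η_{i,i} = 1` and `η_{j,i} = η_{i,j}`. -/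
def wηg (i j : ℕ) : FreeMonoid (TBGen n) :=
  if i = j then 1
  else wσRange n (min i j) (max i j - 2) * wη n (max i j - 1) *
    wσiRangeRev n (min i j) (max i j - 2)

/-- The word representing the generalized tie `φⱼ = σ_{j-1} ⋯ σ₁ φ₁ σ₁⁻¹ ⋯ σ_{j-1}⁻¹`. -/
def wφg (j : ℕ) : FreeMonoid (TBGen n) :=
  wσDesc n (j - 1) * wφ n * wσiAsc n (j - 1)

/-- The generalized tie `η_{i,j}` joining the `i`-th and `j`-th moving strands. -/
def ηg (i j : ℕ) : TB n := mk n (wηg n i j)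

/-- The generalized tie `φⱼ` joining the fixed strand and the `j`-th moving strand. -/
def φg (j : ℕ) : TB n := mk n (wφg n j)

end TiedBraidB

/-! Write `u : x ⟶ y` for `u * x = y * u`. By definition `σᵢ : η_{i+1,j} ⟶ η_{i,j}`, and the
relation in the opposite direction amounts to `σᵢ²` commuting with `η_{i+1,j}`. For adjacent
`i`, `j` comparing `σⱼσᵢ : ηⱼ ⟶ ηᵢ` with `σⱼσᵢ⁻¹ : ηⱼ ⟶ ηᵢ` shows that `σᵢ²` commutes with `ηⱼ`; the
braid relation, in the form `σᵢ² = (σᵢ₊₁σᵢ) σᵢ₊₁² (σᵢ₊₁σᵢ)⁻¹`, then carries this to all `η_{i+1,j}`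
by induction.

On the right end point, `σᵢ₊₁ = σᵢ (σᵢ₊₁σᵢ)⁻¹ σᵢ₊₁²` maps `ηᵢ ⟶ ηᵢ ⟶ ηᵢ₊₁ ⟶ η_{i,i+2}`. Both
`σⱼ : η_{i,j} ⟶ η_{i,j+1}` and the commutation of `σⱼ²` with `η_{i,j}` propagate from `i + 1` to `i`
because `σⱼ` commutes with `σᵢ`. -/

namespace TiedBraidB

section Monoid

variable {M : Type*} [Monoid M] {a b : Mˣ} {x y : M}

theorem semiconjBy_swap_of_commute_sq (h : SemiconjBy (a : M) x y)
    (hx : Commute ((a ^ 2 : Mˣ) : M) x) : SemiconjBy (a : M) y x := by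
  have hcomp : SemiconjBy ((a ^ 2 * a⁻¹ : Mˣ) : M) y x := by
    simpa only [Units.val_mul] using SemiconjBy.mul_left hx h.units_inv_symm_left
  rwa [show a ^ 2 * a⁻¹ = a by group] at hcomp

theorem commute_sq_of_semiconjBy_mul (h : SemiconjBy ((b * a : Mˣ) : M) x y)
    (h' : SemiconjBy ((b * a⁻¹ : Mˣ) : M) x y) : Commute ((a ^ 2 : Mˣ) : M) x := by
  have hcomp : SemiconjBy (((b * a⁻¹)⁻¹ * (b * a) : Mˣ) : M) x x := by
    simpa only [Units.val_mul] using h'.units_inv_symm_left.mul_left h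
  rwa [show (b * a⁻¹)⁻¹ * (b * a) = a ^ 2 by simp [pow_two]] at hcomp

theorem sq_eq_conj_sq_of_braid {G : Type*} [Group G] {a b : G} (hab : a * b * a = b * a * b) :
    a ^ 2 = (b * a) * b ^ 2 * (b * a)⁻¹ := by
  rw [eq_mul_inv_iff_mul_eq]
  calc a ^ 2 * (b * a) = a * (a * b * a) := by simp only [pow_two, mul_assoc]
    _ = a * (b * a * b) := by rw [hab]
    _ = (a * b * a) * b := by simp only [mul_assoc]
    _ = (b * a * b) * b := by rw [hab]
    _ = (b * a) * b ^ 2 := by simp only [pow_two, mul_assoc]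

theorem commute_sq_of_braid (hab : a * b * a = b * a * b) (h : SemiconjBy (b : M) x y)
    (ha : Commute (a : M) x) (hb : Commute ((b ^ 2 : Mˣ) : M) x) :
    Commute ((a ^ 2 : Mˣ) : M) y := by
  have hba : SemiconjBy ((b * a : Mˣ) : M) x y := by
    simpa only [Units.val_mul] using h.mul_left ha
  rw [sq_eq_conj_sq_of_braid hab, Units.val_mul, Units.val_mul]
  exact (hba.mul_left hb).mul_left hba.units_inv_symm_left

end Monoid

variable {n : ℕ}

theorem mk_eq_mk_of_tbRel {v w : FreeMonoid (TBGen n)} (h : tbRel n v w) : mk n v = mk n w :=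
  (Con.eq _).2 (ConGen.Rel.of _ _ h)

theorem σB_mul_σiB (n i : ℕ) : σB n i * σiB n i = 1 := by
  by_cases h : 1 ≤ i ∧ i ≤ n - 1
  · exact mk_eq_mk_of_tbRel (.sig_inv i h.1 h.2)
  · simp [σB, σiB, wσ, wσi, h]

theorem σiB_mul_σB (n i : ℕ) : σiB n i * σB n i = 1 := by
  by_cases h : 1 ≤ i ∧ i ≤ n - 1
  · exact mk_eq_mk_of_tbRel (.inv_sig i h.1 h.2)
  · simp [σB, σiB, wσ, wσi, h]

/-- The braid generator `σᵢ` as a unit of `TBₙᴮ`, so that group identities between braids can be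
applied to it. It is `1` for `i` out of range, like `σB n i`. -/
def σUnit (n i : ℕ) : (TB n)ˣ := ⟨σB n i, σiB n i, σB_mul_σiB n i, σiB_mul_σB n i⟩

theorem commute_σUnit {i j : ℕ} (hij : i + 1 < j) : Commute (σUnit n i : TB n) (σUnit n j) := by
  change σB n i * σB n j = σB n j * σB n i
  by_cases h : 1 ≤ i ∧ j ≤ n - 1
  · exact mk_eq_mk_of_tbRel (.sig_comm i j h.1 hij h.2)
  · obtain hi | hj : ¬(1 ≤ i ∧ i ≤ n - 1) ∨ ¬(1 ≤ j ∧ j ≤ n - 1) := by omega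
    · simp [σB, wσ, hi]
    · simp [σB, wσ, hj]

theorem σUnit_braid {i : ℕ} (hi : 1 ≤ i) (hin : i + 1 < n) :
    σUnit n i * σUnit n (i + 1) * σUnit n i = σUnit n (i + 1) * σUnit n i * σUnit n (i + 1) :=
  Units.ext <| mk_eq_mk_of_tbRel <| .sig_braid i hi (by omega)

theorem commute_σUnit_ηB {i j : ℕ} (hij : i + 1 < j) : Commute (σUnit n i : TB n) (ηB n j) := by
  change σB n i * ηB n j = ηB n j * σB n i
  by_cases h : 1 ≤ i ∧ j ≤ n - 1
  · exact (mk_eq_mk_of_tbRel <|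
      .eta_sig_far j i (by omega) h.2 h.1 (by omega) (Or.inr hij)).symm
  · obtain hi | hj : ¬(1 ≤ i ∧ i ≤ n - 1) ∨ ¬(1 ≤ j ∧ j ≤ n - 1) := by omega
    · simp [σB, wσ, hi]
    · simp [ηB, wη, hj]

theorem semiconjBy_σUnit_mul_ηB {i j : ℕ} (hi : 1 ≤ i) (hin : i < n) (hj : 1 ≤ j) (hjn : j < n)
    (hij : j = i + 1 ∨ i = j + 1) :
    SemiconjBy ((σUnit n j * σUnit n i : (TB n)ˣ) : TB n) (ηB n j) (ηB n i) := by
  have h := mk_eq_mk_of_tbRel (n := n) (.eta_sig_sig i j hi (by omega) hj (by omega) hij)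
  exact h.symm.trans (mul_assoc (ηB n i) (σB n j) (σB n i))

theorem semiconjBy_σUnit_mul_inv_ηB {i j : ℕ} (hi : 1 ≤ i) (hin : i < n) (hj : 1 ≤ j) (hjn : j < n)
    (hij : j = i + 1 ∨ i = j + 1) :
    SemiconjBy ((σUnit n j * (σUnit n i)⁻¹ : (TB n)ˣ) : TB n) (ηB n j) (ηB n i) := by
  have h := mk_eq_mk_of_tbRel (n := n) (.eta_sig_sigInv i j hi (by omega) hj (by omega) hij)
  exact h.symm.trans (mul_assoc (ηB n i) (σB n j) (σiB n i))

theorem commute_σUnit_sq_ηB {i j : ℕ} (hi : 1 ≤ i) (hin : i < n) (hj : 1 ≤ j) (hjn : j < n)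
    (hij : j = i + 1 ∨ i = j + 1) :
    Commute ((σUnit n i ^ 2 : (TB n)ˣ) : TB n) (ηB n j) :=
  commute_sq_of_semiconjBy_mul (semiconjBy_σUnit_mul_ηB hi hin hj hjn hij)
    (semiconjBy_σUnit_mul_inv_ηB hi hin hj hjn hij)

theorem wηg_of_lt {i j : ℕ} (hij : i < j) :
    wηg n i j = wσRange n i (j - 2) * wη n (j - 1) * wσiRangeRev n i (j - 2) := by
  rw [wηg, if_neg hij.ne, min_eq_left hij.le, max_eq_right hij.le]

theorem ηg_succ_right {i : ℕ} (hi : 1 ≤ i) : ηg n i (i + 1) = ηB n i := by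
  have hlen : i + 1 - 2 + 1 - i = 0 := by omega
  rw [ηg, wηg_of_lt i.lt_succ_self, wσRange, wσiRangeRev, hlen]
  simp [ηB]

theorem ηg_eq_conj {i j : ℕ} (hij : i + 1 < j) :
    ηg n i j = σUnit n i * ηg n (i + 1) j * ((σUnit n i)⁻¹ : (TB n)ˣ) := by
  have hlen : j - 2 + 1 - i = (j - 2 + 1 - (i + 1)) + 1 := by omega
  have hσ : wσRange n i (j - 2) = wσ n i * wσRange n (i + 1) (j - 2) := by
    simp [wσRange, hlen, List.range'_succ]
  have hσi : wσiRangeRev n i (j - 2) = wσiRangeRev n (i + 1) (j - 2) * wσi n i := by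
    simp [wσiRangeRev, hlen, List.range'_succ]
  change mk n (wηg n i j) = mk n (wσ n i) * mk n (wηg n (i + 1) j) * mk n (wσi n i)
  rw [wηg_of_lt hij, wηg_of_lt (by omega), hσ, hσi]
  simp only [map_mul, mul_assoc]

theorem semiconjBy_σUnit_ηg_succ_left {i j : ℕ} (hij : i + 1 < j) :
    SemiconjBy (σUnit n i : TB n) (ηg n (i + 1) j) (ηg n i j) := by
  rw [ηg_eq_conj hij]
  exact Units.mk_semiconjBy (σUnit n i) _

theorem semiconjBy_ηg_of_succ_left {i j k : ℕ} {u : TB n} (hu : Commute u (σUnit n i))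
    (hij : i + 1 < j) (hik : i + 1 < k)
    (h : SemiconjBy u (ηg n (i + 1) j) (ηg n (i + 1) k)) :
    SemiconjBy u (ηg n i j) (ηg n i k) := by
  rw [ηg_eq_conj hij, ηg_eq_conj hik]
  exact (SemiconjBy.mul_right hu h).mul_right hu.units_inv_right

theorem commute_σUnit_ηg {i j k : ℕ} (hki : k + 1 < i) (hij : i < j) :
    Commute (σUnit n k : TB n) (ηg n i j) := by
  obtain rfl | hij := eq_or_lt_of_le (Nat.succ_le_of_lt hij)
  · rw [ηg_succ_right (by omega)]
    exact commute_σUnit_ηB hki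
  · exact semiconjBy_ηg_of_succ_left (commute_σUnit hki) hij hij
      (commute_σUnit_ηg (by omega) hij)
termination_by j - i

theorem commute_σUnit_sq_ηg_left {i j : ℕ} (hi : 1 ≤ i) (hij : i + 1 < j) (hjn : j ≤ n) :
    Commute ((σUnit n i ^ 2 : (TB n)ˣ) : TB n) (ηg n (i + 1) j) := by
  obtain rfl | hij := eq_or_lt_of_le (Nat.succ_le_of_lt hij)
  · rw [ηg_succ_right (by omega)]
    exact commute_σUnit_sq_ηB hi (by omega) (by omega) (by omega) (Or.inl rfl)
  · exact commute_sq_of_braid (σUnit_braid hi (by omega)) (semiconjBy_σUnit_ηg_succ_left hij)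
      (commute_σUnit_ηg (by omega) hij) (commute_σUnit_sq_ηg_left (by omega) hij hjn)
termination_by j - i

theorem commute_σUnit_sq_ηg_right {i j : ℕ} (hi : 1 ≤ i) (hij : i < j) (hjn : j < n) :
    Commute ((σUnit n j ^ 2 : (TB n)ˣ) : TB n) (ηg n i j) := by
  obtain rfl | hij := eq_or_lt_of_le (Nat.succ_le_of_lt hij)
  · rw [ηg_succ_right hi]
    exact commute_σUnit_sq_ηB (by omega) hjn hi (by omega) (Or.inr rfl)
  · refine semiconjBy_ηg_of_succ_left ?_ hij hij (commute_σUnit_sq_ηg_right (by omega) hij hjn)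
    simpa only [Units.val_pow_eq_pow_val] using (commute_σUnit hij).symm.pow_left 2
termination_by j - i

theorem semiconjBy_σUnit_ηB_ηg {i : ℕ} (hi : 1 ≤ i) (hin : i + 1 < n) :
    SemiconjBy (σUnit n (i + 1) : TB n) (ηB n i) (ηg n i (i + 2)) := by
  have hsq : Commute ((σUnit n (i + 1) ^ 2 : (TB n)ˣ) : TB n) (ηB n i) :=
    commute_σUnit_sq_ηB (by omega) hin hi (by omega) (Or.inr rfl)
  have hmul : SemiconjBy ((σUnit n (i + 1) * σUnit n i : (TB n)ˣ) : TB n) (ηB n (i + 1)) (ηB n i) :=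
    semiconjBy_σUnit_mul_ηB hi (by omega) (by omega) hin (Or.inl rfl)
  have hup : SemiconjBy (σUnit n i : TB n) (ηB n (i + 1)) (ηg n i (i + 2)) := by
    rw [← ηg_succ_right (by omega)]
    exact semiconjBy_σUnit_ηg_succ_left (by omega)
  have hcomp := (hup.mul_left hmul.units_inv_symm_left).mul_left hsq
  simp only [← Units.val_mul] at hcomp
  have hprod : σUnit n i * (σUnit n (i + 1) * σUnit n i)⁻¹ * σUnit n (i + 1) ^ 2 =
      σUnit n (i + 1) := by group
  rwa [hprod] at hcomp

theorem semiconjBy_σUnit_ηg_succ_right {i j : ℕ} (hi : 1 ≤ i) (hij : i < j) (hjn : j < n) :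
    SemiconjBy (σUnit n j : TB n) (ηg n i j) (ηg n i (j + 1)) := by
  obtain rfl | hij := eq_or_lt_of_le (Nat.succ_le_of_lt hij)
  · rw [ηg_succ_right hi]
    exact semiconjBy_σUnit_ηB_ηg hi hjn
  · exact semiconjBy_ηg_of_succ_left (commute_σUnit hij).symm hij (by omega)
      (semiconjBy_σUnit_ηg_succ_right (by omega) hij hjn)
termination_by j - i

end TiedBraidB

open TiedBraidB in
/-- Commutation relations between generalized ties and braid
generators in `TBₙᴮ`:
`σᵢ η_{i,j} = η_{i+1,j} σᵢ` for `1 ≤ i`, `i+1 < j ≤ n`;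
`σⱼ η_{i,j} = η_{i,j+1} σⱼ` for `1 ≤ i < j ≤ n-1`;
`σ_{i-1} η_{i,j} = η_{i-1,j} σ_{i-1}` for `2 ≤ i < j ≤ n`;
`σ_{j-1} η_{i,j} = η_{i,j-1} σ_{j-1}` for `1 ≤ i < j-1` and `j ≤ n`. -/
theorem sigma_mul_generalizedTie (n : ℕ) :
    (∀ (i j : ℕ) (_h1 : 1 ≤ i) (_h2 : i + 1 < j) (_h3 : j ≤ n),
      σB n i * ηg n i j = ηg n (i + 1) j * σB n i) ∧
    (∀ (i j : ℕ) (_h1 : 1 ≤ i) (_h2 : i < j) (_h3 : j ≤ n - 1),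
      σB n j * ηg n i j = ηg n i (j + 1) * σB n j) ∧
    (∀ (i j : ℕ) (_h1 : 2 ≤ i) (_h2 : i < j) (_h3 : j ≤ n),
      σB n (i - 1) * ηg n i j = ηg n (i - 1) j * σB n (i - 1)) ∧
    (∀ (i j : ℕ) (_h1 : 1 ≤ i) (_h2 : i < j - 1) (_h3 : j ≤ n),
      σB n (j - 1) * ηg n i j = ηg n i (j - 1) * σB n (j - 1)) := by
  refine ⟨fun i j hi hij hjn => ?_, fun i j hi hij hjn => ?_, fun i j hi hij _ => ?_,
    fun i j hi hij hjn => ?_⟩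
  · exact semiconjBy_swap_of_commute_sq (semiconjBy_σUnit_ηg_succ_left hij)
      (commute_σUnit_sq_ηg_left hi hij hjn)
  · exact semiconjBy_σUnit_ηg_succ_right hi hij (by omega)
  · obtain ⟨i, rfl⟩ := Nat.exists_eq_add_of_le' (by omega : 1 ≤ i)
    exact semiconjBy_σUnit_ηg_succ_left hij
  · obtain ⟨j, rfl⟩ := Nat.exists_eq_add_of_le' (by omega : 1 ≤ j)
    exact semiconjBy_swap_of_commute_sq (semiconjBy_σUnit_ηg_succ_right hi hij (by omega))
      (commute_σUnit_sq_ηg_right hi hij (by omega))
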